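/- Let (Ω, F, P) be a probability space, Z a {0,1}-valued random variable, Y(0), Y(1) real random variables, X a random element, and Y = Z·Y(1) + (1−Z)·Y(0). Assume Z is conditionally independent of (Y(0),Y(1)) given X and that the propensity score e(X) = P(Z=1|X) satisfies 0 < e(X) < 1 almost surely. Then E[Z·Y/e(X)] = E[Y(1)] and E[(1−Z)·Y/(1−e(X))] = E[Y(0)], hence E[Z·Y/e(X) − (1−Z)·Y/(1−e(X))] = E[Y(1)] − E[Y(0)] (assuming all expectations exist). -/

import Mathlib

/-!
By consistency, `Z * Y = Z * Y1` and `(1 - Z) * Y = (1 - Z) * Y0`, since `Z` takes values in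
`{0, 1}`. Each arm is therefore an instance of one fact about a treatment indicator `T` (namely `Z`
or `1 - Z`) and an outcome `W` conditionally independent given `m`: with `p = μ[T | m]` nonzero
almost everywhere, `μ[T * W / p | m] = μ[T * W | m] / p = μ[W | m]`, and integrating gives
`∫ T * W / p = ∫ W` (`integral_mul_div_condExp`). The middle step uses the factorization
`μ[T * W | m] = μ[T | m] * μ[W | m]` (`condExp_mul_of_condIndepFun`), which holds because
conditionally independent variables are almost surely independent under the regular conditional
probability `condExpKernel μ m`.
-/

open MeasureTheory ProbabilityTheory

/-- The conditional expectation of a product of conditionally independent real random variables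
is the product of the conditional expectations. -/
lemma condExp_mul_of_condIndepFun {Ω : Type*} {m mΩ : MeasurableSpace Ω} [StandardBorelSpace Ω]
    {μ : Measure Ω} [IsFiniteMeasure μ] (hm : m ≤ mΩ) {T W : Ω → ℝ}
    (hT : Measurable T) (hW : Measurable W) (hTint : Integrable T μ) (hWint : Integrable W μ)
    (hTW : Integrable (T * W) μ) (h : CondIndepFun m hm T W μ) :
    μ[T * W | m] =ᵐ[μ] μ[T | m] * μ[W | m] := by
  have hker := ae_of_ae_trim hm ((condIndepFun_iff_map_prod_eq_prod_map_map hT hW).1 h)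
  filter_upwards [hker, condExp_ae_eq_integral_condExpKernel hm hTW,
    condExp_ae_eq_integral_condExpKernel hm hTint,
    condExp_ae_eq_integral_condExpKernel hm hWint] with ω hω hTWω hTω hWω
  have hind : IndepFun T W (condExpKernel μ m ω) := by
    rw [indepFun_iff_map_prod_eq_prod_map_map hT.aemeasurable hW.aemeasurable]
    rwa [Kernel.map_apply _ (hT.prodMk hW), Kernel.prod_apply, Kernel.map_apply _ hT,
      Kernel.map_apply _ hW] at hω
  rw [Pi.mul_apply, hTWω, hTω, hWω]
  exact hind.integral_mul_eq_mul_integral hT.aestronglyMeasurable hW.aestronglyMeasurable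

/-- Weighting `T * W` by the inverse of `p = μ[T | m]` recovers the mean of `W`, when `T` and `W`
are conditionally independent given `m` and `p` is almost everywhere nonzero. -/
lemma integral_mul_div_condExp {Ω : Type*} {m mΩ : MeasurableSpace Ω} [StandardBorelSpace Ω]
    {μ : Measure Ω} [IsFiniteMeasure μ] (hm : m ≤ mΩ) {T W p : Ω → ℝ}
    (hT : Measurable T) (hW : Measurable W) (hTint : Integrable T μ) (hWint : Integrable W μ)
    (hTW : Integrable (T * W) μ) (h : CondIndepFun m hm T W μ)
    (hp : p =ᵐ[μ] μ[T | m]) (hp0 : ∀ᵐ ω ∂μ, p ω ≠ 0)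
    (hint : Integrable (fun ω => T ω * W ω / p ω) μ) :
    ∫ ω, T ω * W ω / p ω ∂μ = ∫ ω, W ω ∂μ := by
  have hEq : (fun ω => T ω * W ω / p ω) =ᵐ[μ] (μ[T | m])⁻¹ * (T * W) := by
    filter_upwards [hp] with ω hω
    simp only [Pi.mul_apply, Pi.inv_apply, ← hω]
    ring
  have hpull := condExp_mul_of_stronglyMeasurable_left (m := m)
    (stronglyMeasurable_condExp (f := T) (μ := μ) (m := m)).measurable.inv.stronglyMeasurable
    (hint.congr hEq) hTW
  have hcond : μ[(μ[T | m])⁻¹ * (T * W) | m] =ᵐ[μ] μ[W | m] := by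
    filter_upwards [hpull, condExp_mul_of_condIndepFun hm hT hW hTint hWint hTW h, hp, hp0]
      with ω h1 h2 h3 h4
    rw [h1, Pi.mul_apply, h2, Pi.mul_apply, Pi.inv_apply, inv_mul_cancel_left₀ (h3 ▸ h4)]
  rw [integral_congr_ae hEq, ← integral_condExp hm, integral_congr_ae hcond, integral_condExp hm]

/-- identification of the average causal effect by inverse
probability weighting. Under strong ignorability (`Z ⟂ (Y(0),Y(1)) | X`) and
positivity of the propensity score `e(X) = E[Z|X]`, we have
`E[ZY/e(X)] = E[Y(1)]`, `E[(1-Z)Y/(1-e(X))] = E[Y(0)]`, and hence the IPW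
contrast identifies `E[Y(1)] - E[Y(0)]`. -/
theorem ipw_identifies_ace
    {Ω : Type*} [mΩ : MeasurableSpace Ω] [StandardBorelSpace Ω]
    (μ : Measure Ω) [IsProbabilityMeasure μ]
    {𝒳 : Type*} [MeasurableSpace 𝒳] (X : Ω → 𝒳) (hX : Measurable X)
    (Z : Ω → ℝ) (hZ : Measurable Z) (hZ01 : ∀ ω, Z ω = 0 ∨ Z ω = 1)
    (Y0 Y1 : Ω → ℝ) (hY0 : Measurable Y0) (hY1 : Measurable Y1)
    (hY0int : Integrable Y0 μ) (hY1int : Integrable Y1 μ)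
    (Y : Ω → ℝ) (hY : Y = fun ω => Z ω * Y1 ω + (1 - Z ω) * Y0 ω)
    (mX : MeasurableSpace Ω) (hmX : mX = MeasurableSpace.comap X inferInstance)
    (hmXle : mX ≤ mΩ)
    (hindep : @CondIndepFun Ω mX mΩ _ hmXle ℝ (ℝ × ℝ) _ _ Z (fun ω => (Y0 ω, Y1 ω)) μ _)
    (e : Ω → ℝ) (he : e = μ[Z | mX])
    (hpos : ∀ᵐ ω ∂μ, 0 < e ω ∧ e ω < 1)
    (hint1 : Integrable (fun ω => Z ω * Y ω / e ω) μ)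
    (hint0 : Integrable (fun ω => (1 - Z ω) * Y ω / (1 - e ω)) μ) :
    (∫ ω, Z ω * Y ω / e ω ∂μ) = ∫ ω, Y1 ω ∂μ ∧
    (∫ ω, (1 - Z ω) * Y ω / (1 - e ω) ∂μ) = ∫ ω, Y0 ω ∂μ ∧
    (∫ ω, (Z ω * Y ω / e ω - (1 - Z ω) * Y ω / (1 - e ω)) ∂μ)
      = (∫ ω, Y1 ω ∂μ) - ∫ ω, Y0 ω ∂μ := by
  have hZbd : ∀ ω, ‖Z ω‖ ≤ 1 := fun ω => by rcases hZ01 ω with h | h <;> simp [h]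
  have hZbd' : ∀ ω, ‖1 - Z ω‖ ≤ 1 := fun ω => by rcases hZ01 ω with h | h <;> simp [h]
  have hZ' : Measurable[mΩ] (fun ω => 1 - Z ω) := measurable_const.sub hZ
  have hZint : Integrable Z μ :=
    .of_bound hZ.aestronglyMeasurable 1 (.of_forall hZbd)
  have hZint' : Integrable (fun ω => 1 - Z ω) μ :=
    .of_bound hZ'.aestronglyMeasurable 1 (.of_forall hZbd')
  -- Consistency: the observed outcome is `Y1` on the treated and `Y0` on the untreated.
  have hcons1 : ∀ ω, Z ω * Y ω = Z ω * Y1 ω := fun ω => by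
    rcases hZ01 ω with h | h <;> simp [hY, h]
  have hcons0 : ∀ ω, (1 - Z ω) * Y ω = (1 - Z ω) * Y0 ω := fun ω => by
    rcases hZ01 ω with h | h <;> simp [hY, h]
  have hone_sub : (fun ω => 1 - e ω) =ᵐ[μ] μ[fun ω => 1 - Z ω | mX] := by
    have hsub := condExp_sub (integrable_const (1 : ℝ)) hZint mX
    rw [condExp_const hmXle, ← he] at hsub
    exact hsub.symm
  have h1 : (∫ ω, Z ω * Y ω / e ω ∂μ) = ∫ ω, Y1 ω ∂μ := by
    simp only [hcons1] at hint1 ⊢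
    exact integral_mul_div_condExp hmXle hZ hY1 hZint hY1int
      (hY1int.bdd_mul hZ.aestronglyMeasurable (.of_forall hZbd))
      (hindep.comp measurable_id measurable_snd) (.of_eq he)
      (hpos.mono fun ω h => h.1.ne') hint1
  have h0 : (∫ ω, (1 - Z ω) * Y ω / (1 - e ω) ∂μ) = ∫ ω, Y0 ω ∂μ := by
    simp only [hcons0] at hint0 ⊢
    exact integral_mul_div_condExp hmXle hZ' hY0 hZint' hY0int
      (hY0int.bdd_mul hZ'.aestronglyMeasurable (.of_forall hZbd'))
      (hindep.comp (measurable_const.sub measurable_id) measurable_fst) hone_sub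
      (hpos.mono fun ω h => (sub_pos.2 h.2).ne') hint0
  exact ⟨h1, h0, by rw [integral_sub hint1 hint0, h1, h0]⟩
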